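/- P(0,0) = V(0)². -/

import Mathlib

/-!
At `j = k = 0` the additive character drops out of `P(j,k)`, and for `x ≠ 0` we have
`φ(a/x - x) = φ(x) φ(a - x²) = A₄(x²) φ(a - x²)`. Since `y` has `1 + φ(y)` square roots, summing
over `x` amounts to summing `(1 + φ(y)) A₄(y) φ(a - y)` over `y`, which gives the two Jacobi sums
`J(A₄, φ)` and `J(A₄³, φ)`. Through Gauss sums, with `G = G(A₄)` and `u = A₄(a) G(A₄³)`, this reads
`P(0,0) = 2 + G/u + u/G`. Finally `G(A₄) G(A₄³) = A₄(-1) q` says that `τ² = G u`, so that `P(0,0)`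
is the square of `G/τ + τ/G`.
-/

open Finset

noncomputable section

variable {F : Type} [Field F] [Fintype F] [DecidableEq F]

/-- Katz's mixed character sum `P(j,k)`; the quadratic character `φ` is `A₄ ^ 2`. -/
def Pkatz (ψ : AddChar F ℂ) (A₄ : MulChar F ℂ) (a : F) (j k : F) : ℂ :=
  (if j = k then 1 else 0) + (A₄ ^ 2) (-1) * (if j = -k then 1 else 0) +
    (gaussSum (A₄ ^ 2) ψ)⁻¹ *
      ∑ x ∈ univ.filter (fun x : F => x ≠ 0),
        (A₄ ^ 2) (a / x - x) * ψ (x * (j + k) ^ 2 + (a / x) * (j - k) ^ 2)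

/-- Katz's sums `V(j)`. -/
def Vkatz (ψ : AddChar F ℂ) (A₄ : MulChar F ℂ) (a : F) (τ : ℂ) (j : F) : ℂ :=
  if j = 0 then gaussSum A₄ ψ / τ + τ / gaussSum A₄ ψ
  else τ⁻¹ * ∑ x ∈ univ.filter (fun x : F => x ≠ 0), A₄ x * ψ (x + a * j ^ 4 / x)

/-- The finite field hypergeometric function `₂F₁(A,B;C|x)`. -/
def hyp2F1 (A B C : MulChar F ℂ) (x : F) : ℂ :=
  ((1 : MulChar F ℂ) x / (Fintype.card F : ℂ)) *
    ∑ y : F, B y * (B⁻¹ * C) (y - 1) * A⁻¹ (1 - x * y)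

/-- The Jacobi sum `J(A,B)`. -/
def Jsum (A B : MulChar F ℂ) : ℂ := ∑ y : F, A y * B (1 - y)

/-- The sum `h(D,j)`; the quadratic character `φ` is `A₄ ^ 2`. -/
def hKatz (A₄ D : MulChar F ℂ) (j : F) : ℂ :=
  ∑ x ∈ univ.filter (fun x : F => x ≠ 0),
    D x * (A₄ ^ 2) (1 - x) * ((D⁻¹ ^ 2) * A₄ ^ 2) (x * (j + 1) ^ 2 + (j - 1) ^ 2)

/-- The sum `H(λ₁)`; the quadratic character `φ` is `A₄ ^ 2`. -/
def Hkatz (A₄ lam : MulChar F ℂ) (a : F) : ℂ :=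
  ∑ p ∈ (univ ×ˢ univ).filter
      (fun p : F × F => p.1 ≠ 0 ∧ p.2 ≠ 0 ∧
        p.2 * (p.1 + 1) ^ 2 + a * (p.1 - 1) ^ 2 / p.2 = 0),
    (lam ^ 2 * A₄ ^ 2) p.1 * (A₄ ^ 2) (p.2 - a / p.2)

/-- The Mellin transform `S(χ)` of the sums `V(j)`. -/
def Smel (ψ : AddChar F ℂ) (A₄ : MulChar F ℂ) (a : F) (τ : ℂ) (χ : MulChar F ℂ) : ℂ :=
  ∑ j ∈ univ.filter (fun j : F => j ≠ 0), χ j * Vkatz ψ A₄ a τ j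

/-- The Mellin transform `T(χ)` of the sums `P(j,0)`. -/
def Tmel (ψ : AddChar F ℂ) (A₄ : MulChar F ℂ) (a : F) (χ : MulChar F ℂ) : ℂ :=
  ∑ j ∈ univ.filter (fun j : F => j ≠ 0), χ j * Pkatz ψ A₄ a j 0

/-- The double Mellin transform `T(χ₁,χ₂)` of the sums `P(j,k)`. -/
def Tmel2 (ψ : AddChar F ℂ) (A₄ : MulChar F ℂ) (a : F) (χ₁ χ₂ : MulChar F ℂ) : ℂ :=
  ∑ j ∈ univ.filter (fun j : F => j ≠ 0), ∑ k ∈ univ.filter (fun k : F => k ≠ 0),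
    χ₁ j * χ₂ k * Pkatz ψ A₄ a j k

end

theorem pow_three_mul_sq_of_orderOf_eq_four {M : Type*} [Monoid M] {x : M} (hx : orderOf x = 4) :
    x ^ 3 * x ^ 2 = x := by
  have hx4 : x ^ 4 = 1 := hx ▸ pow_orderOf_eq_one x
  rw [← pow_add, pow_succ, hx4, one_mul]

section MulChar

theorem mulChar_apply_generator_of_orderOf_eq_two {M R : Type*} [CommMonoid M] [CommRing R]
    [NoZeroDivisors R] {χ : MulChar M R} (hχ : orderOf χ = 2) {g : Mˣ}
    (hg : ∀ x, x ∈ Subgroup.zpowers g) : χ g = -1 := by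
  have hsq : χ g ^ 2 = 1 := by
    rw [← MulChar.pow_apply_coe, ← hχ, pow_orderOf_eq_one, MulChar.one_apply_coe]
  refine (sq_eq_one_iff.mp hsq).resolve_left fun h ↦ ?_
  have hχ1 : χ = 1 := (MulChar.eq_iff hg χ 1).mpr (by rw [h, MulChar.one_apply_coe])
  simp [hχ1] at hχ

theorem ringChar_ne_two_of_two_dvd_orderOf {F R : Type*} [Field F] [Finite F] [CommRing R]
    {χ : MulChar F R} (hχ : 2 ∣ orderOf χ) : ringChar F ≠ 2 := fun hF ↦ by
  cases nonempty_fintype F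
  have heven := FiniteField.even_card_of_char_two hF
  have hdvd := hχ.trans χ.orderOf_dvd_card_sub_one
  have hcard := Fintype.card_pos (α := F)
  omega

variable {F R : Type*} [Field F] [Fintype F] [CommRing R] [NoZeroDivisors R]

theorem eq_ringHomComp_quadraticChar [DecidableEq F] {φ : MulChar F R} (hφ : orderOf φ = 2) :
    φ = (quadraticChar F).ringHomComp (Int.castRingHom R) := by
  obtain ⟨g, hg⟩ := IsCyclic.exists_generator (α := Fˣ)
  have hF : ringChar F ≠ 2 := ringChar_ne_two_of_two_dvd_orderOf hφ.symm.dvd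
  have hquad : orderOf (quadraticChar F) = 2 :=
    orderOf_eq_prime (quadraticChar_isQuadratic F).sq_eq_one (quadraticChar_ne_one hF)
  rw [MulChar.eq_iff hg, MulChar.ringHomComp_apply,
    mulChar_apply_generator_of_orderOf_eq_two hφ hg,
    mulChar_apply_generator_of_orderOf_eq_two hquad hg, map_neg, map_one]

theorem card_sqrts_eq_one_add_mulChar [DecidableEq F] {φ : MulChar F R} (hφ : orderOf φ = 2)
    (y : F) : (#{x : F | x ^ 2 = y} : R) = 1 + φ y := by
  have hF : ringChar F ≠ 2 := ringChar_ne_two_of_two_dvd_orderOf hφ.symm.dvd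
  have hcard := congrArg (Int.cast : ℤ → R) (quadraticChar_card_sqrts hF y)
  rw [Set.toFinset_ofPred] at hcard
  rw [eq_ringHomComp_quadraticChar hφ, add_comm]
  simpa using hcard

theorem sum_comp_sq {φ : MulChar F R} (hφ : orderOf φ = 2) (f : F → R) :
    ∑ x, f (x ^ 2) = ∑ y, (1 + φ y) * f y := by
  classical
  rw [← sum_fiberwise univ (· ^ 2)]
  refine sum_congr rfl fun y _ ↦ ?_
  rw [← card_sqrts_eq_one_add_mulChar hφ, ← nsmul_eq_mul, ← sum_const]
  exact sum_congr rfl fun x hx ↦ by rw [(mem_filter.mp hx).2]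

end MulChar

section JacobiSum

variable {F R : Type*} [Field F] [Fintype F] [CommRing R]

theorem sum_mul_sub_eq_jacobiSum (χ η : MulChar F R) {a : F} (ha : a ≠ 0) :
    ∑ y, χ y * η (a - y) = (χ * η) a * jacobiSum χ η := by
  rw [jacobiSum, mul_sum, ← Equiv.sum_comp (Equiv.mulLeft₀ a ha)]
  refine sum_congr rfl fun y _ ↦ ?_
  rw [Equiv.mulLeft₀_apply, ← mul_one_sub, map_mul, map_mul, MulChar.mul_apply, mul_mul_mul_comm]

theorem sum_sq_mul_sub_sq_eq_jacobiSum_add_jacobiSum [NoZeroDivisors R] {φ : MulChar F R}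
    (hφ : orderOf φ = 2) (χ η : MulChar F R) {a : F} (ha : a ≠ 0) :
    ∑ x, χ (x ^ 2) * η (a - x ^ 2) =
      (χ * η) a * jacobiSum χ η + (χ * φ * η) a * jacobiSum (χ * φ) η := by
  rw [sum_comp_sq hφ fun y ↦ χ y * η (a - y), ← sum_mul_sub_eq_jacobiSum χ η ha,
    ← sum_mul_sub_eq_jacobiSum (χ * φ) η ha, ← sum_add_distrib]
  refine sum_congr rfl fun y _ ↦ ?_
  rw [MulChar.mul_apply]
  ring

theorem sum_sq_div_sub_eq_sum_sq_mul_sub_sq [DecidableEq F] {χ : MulChar F R} (hχ : χ ^ 4 = 1)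
    (a : F) :
    ∑ x with x ≠ 0, (χ ^ 2) (a / x - x) = ∑ x, χ (x ^ 2) * (χ ^ 2) (a - x ^ 2) := by
  rw [sum_filter]
  refine sum_congr rfl fun x _ ↦ ?_
  split_ifs with hx
  · have hφx : (χ ^ 2) x * (χ ^ 2) x = 1 := by
      rw [← MulChar.mul_apply, ← pow_add, hχ, MulChar.one_apply hx.isUnit]
    calc (χ ^ 2) (a / x - x)
        = (χ ^ 2) x * (χ ^ 2) x * (χ ^ 2) (a / x - x) := by rw [hφx, one_mul]
      _ = χ (x ^ 2) * (χ ^ 2) (x * (a / x - x)) := by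
          rw [map_mul, map_pow, ← MulChar.pow_apply' χ two_ne_zero, mul_assoc]
      _ = χ (x ^ 2) * (χ ^ 2) (a - x ^ 2) := by
          rw [mul_sub, mul_div_cancel₀ a hx, sq]
  · simp [not_not.mp hx, MulChar.map_zero]

theorem sum_sq_div_sub_eq_jacobiSum_add_jacobiSum [DecidableEq F] [NoZeroDivisors R]
    {χ : MulChar F R} (hχ : orderOf χ = 4) {a : F} (ha : a ≠ 0) :
    ∑ x with x ≠ 0, (χ ^ 2) (a / x - x) =
      (χ ^ 3) a * jacobiSum χ (χ ^ 2) + χ a * jacobiSum (χ ^ 3) (χ ^ 2) := by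
  have hχ4 : χ ^ 4 = 1 := hχ ▸ pow_orderOf_eq_one χ
  have hφ : orderOf (χ ^ 2) = 2 := by rw [orderOf_pow' χ two_ne_zero, hχ]; rfl
  have h3 : χ * χ ^ 2 = χ ^ 3 := (pow_succ' χ 2).symm
  have h5 : χ ^ 3 * χ ^ 2 = χ := pow_three_mul_sq_of_orderOf_eq_four hχ
  rw [sum_sq_div_sub_eq_sum_sq_mul_sub_sq hχ4,
    sum_sq_mul_sub_sq_eq_jacobiSum_add_jacobiSum hφ χ _ ha, h3, h5]

theorem inv_gaussSum_mul_jacobiSum {F K : Type*} [Field F] [Fintype F] [Field K]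
    (hF : (Fintype.card F : K) ≠ 0) {χ φ : MulChar F K} (hφ : φ ≠ 1) (hχφ : χ * φ ≠ 1)
    {ψ : AddChar F K} (hψ : ψ.IsPrimitive) :
    (gaussSum φ ψ)⁻¹ * jacobiSum χ φ = gaussSum χ ψ / gaussSum (χ * φ) ψ := by
  have hGφ : gaussSum φ ψ ≠ 0 := gaussSum_ne_zero_of_nontrivial hF hφ hψ
  rw [jacobiSum_eq_gaussSum_mul_gaussSum_div_gaussSum hF hχφ hψ]
  field_simp

end JacobiSum

theorem Pkatz_zero_zero {F : Type} [Field F] [Fintype F] [DecidableEq F] {ψ : AddChar F ℂ}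
    (hψ : ψ.IsPrimitive) {χ : MulChar F ℂ} (hχ : orderOf χ = 4) {a : F} (ha : a ≠ 0) :
    Pkatz ψ χ a 0 0 = 2 + gaussSum χ ψ / (χ a * gaussSum (χ ^ 3) ψ) +
      χ a * gaussSum (χ ^ 3) ψ / gaussSum χ ψ := by
  have hF : (Fintype.card F : ℂ) ≠ 0 := Nat.cast_ne_zero.mpr Fintype.card_ne_zero
  have hχ4 : χ ^ 4 = 1 := hχ ▸ pow_orderOf_eq_one χ
  have hχ1 : χ ≠ 1 := fun h ↦ by simp [h] at hχ
  have hχ2 : χ ^ 2 ≠ 1 := pow_ne_one_of_lt_orderOf two_ne_zero (by omega)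
  have hχ3 : χ ^ 3 ≠ 1 := pow_ne_one_of_lt_orderOf three_ne_zero (by omega)
  have h3 : χ * χ ^ 2 = χ ^ 3 := (pow_succ' χ 2).symm
  have h5 : χ ^ 3 * χ ^ 2 = χ := pow_three_mul_sq_of_orderOf_eq_four hχ
  have hJ : (gaussSum (χ ^ 2) ψ)⁻¹ * jacobiSum χ (χ ^ 2) =
      gaussSum χ ψ / gaussSum (χ ^ 3) ψ := by
    rw [inv_gaussSum_mul_jacobiSum hF hχ2 (h3 ▸ hχ3) hψ, h3]
  have hJ' : (gaussSum (χ ^ 2) ψ)⁻¹ * jacobiSum (χ ^ 3) (χ ^ 2) =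
      gaussSum (χ ^ 3) ψ / gaussSum χ ψ := by
    rw [inv_gaussSum_mul_jacobiSum hF hχ2 (h5.symm ▸ hχ1) hψ, h5]
  have hneg : (χ ^ 2) (-1) = 1 := by
    rw [MulChar.pow_apply' χ two_ne_zero, ← map_pow, neg_one_sq, map_one]
  have hinv : (χ ^ 3) a = (χ a)⁻¹ := by
    rw [← MulChar.inv_apply_eq_inv', inv_eq_of_mul_eq_one_right (hχ4 ▸ (pow_succ' χ 3).symm)]
  calc Pkatz ψ χ a 0 0
      = 2 + (gaussSum (χ ^ 2) ψ)⁻¹ * ∑ x with x ≠ 0, (χ ^ 2) (a / x - x) := by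
        simp [Pkatz, hneg, one_add_one_eq_two]
    _ = 2 + (χ a)⁻¹ * ((gaussSum (χ ^ 2) ψ)⁻¹ * jacobiSum χ (χ ^ 2)) +
          χ a * ((gaussSum (χ ^ 2) ψ)⁻¹ * jacobiSum (χ ^ 3) (χ ^ 2)) := by
        rw [sum_sq_div_sub_eq_jacobiSum_add_jacobiSum hχ ha, hinv]
        ring
    _ = _ := by
        rw [hJ, hJ']
        field_simp

theorem Vkatz_zero_sq {F : Type} [Field F] [Fintype F] [DecidableEq F] {ψ : AddChar F ℂ}
    {χ : MulChar F ℂ} (a : F) {τ u : ℂ} (hG : gaussSum χ ψ ≠ 0) (hu : u ≠ 0)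
    (hτ : τ ^ 2 = gaussSum χ ψ * u) :
    Vkatz ψ χ a τ 0 ^ 2 = 2 + gaussSum χ ψ / u + u / gaussSum χ ψ := by
  have hτ0 : τ ≠ 0 := (pow_ne_zero_iff two_ne_zero).mp (hτ ▸ mul_ne_zero hG hu)
  calc Vkatz ψ χ a τ 0 ^ 2
      = 2 + gaussSum χ ψ ^ 2 / τ ^ 2 + τ ^ 2 / gaussSum χ ψ ^ 2 := by
        rw [Vkatz, if_pos rfl]
        field_simp
        ring
    _ = _ := by
        rw [hτ]
        field_simp

/-- `P(0,0) = V(0)²`. -/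
theorem P_zero_zero_eq_V_zero_sq
    (F : Type) [Field F] [Fintype F] [DecidableEq F]
    (hq : Fintype.card F % 4 = 1)
    (ψ : AddChar F ℂ) (hψ : ψ ≠ 1)
    (A₄ : MulChar F ℂ) (hA₄ : orderOf A₄ = 4)
    (a : F) (ha : a ≠ 0)
    (τ : ℂ) (hτ : τ ^ 2 = (Fintype.card F : ℂ) * A₄ (-a)) :
    Pkatz ψ A₄ a 0 0 = Vkatz ψ A₄ a τ 0 ^ 2 := by
  have hψp : ψ.IsPrimitive := AddChar.IsPrimitive.of_ne_one hψ
  have hF : (Fintype.card F : ℂ) ≠ 0 := Nat.cast_ne_zero.mpr Fintype.card_ne_zero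
  have hA1 : A₄ ≠ 1 := fun h ↦ by simp [h] at hA₄
  have hG : gaussSum A₄ ψ ≠ 0 := gaussSum_ne_zero_of_nontrivial hF hA1 hψp
  have hG3 : gaussSum (A₄ ^ 3) ψ ≠ 0 :=
    gaussSum_ne_zero_of_nontrivial hF (pow_ne_one_of_lt_orderOf three_ne_zero (by omega)) hψp
  have hu : A₄ a * gaussSum (A₄ ^ 3) ψ ≠ 0 :=
    mul_ne_zero (MulChar.apply_ne_zero_iff.mpr ha.isUnit) hG3
  have hGG : gaussSum A₄ ψ * gaussSum (A₄ ^ 3) ψ = A₄ (-1) * Fintype.card F := by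
    simpa only [hA₄] using gaussSum_mul_gaussSum_pow_orderOf_sub_one hA1 hψp
  have hτ' : τ ^ 2 = gaussSum A₄ ψ * (A₄ a * gaussSum (A₄ ^ 3) ψ) := by
    rw [hτ, ← neg_one_mul, map_mul, mul_left_comm (gaussSum A₄ ψ), hGG]
    ring
  rw [Pkatz_zero_zero hψp hA₄ ha, Vkatz_zero_sq a hG hu hτ']
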